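/- Fix τ ∈ ℍ, z ∈ ℂ, and a₁, a₂ ∈ ℂ with a₁ + a₂ = −2, and assume z ∉ ℤ+τℤ, 2z ∉ ℤ+τℤ, and (aᵢ+1)z ∉ ℤ+τℤ for i = 1,2. Let F₃(t) = [θ(t+z)θ'(0)/(θ(t)θ(z))]² · [θ(t−z)θ'(0)/(θ(t)θ(−z))] · [θ(t+2z)θ(z)/(θ(t+z)θ(2z))] · ∏_{i=1,2} [θ(t+(aᵢ+1)z)θ(z)/(θ(t+z)θ((aᵢ+1)z))]. Then for all sufficiently small r > 0, the residue of F₃ at t = 0, namely (1/(2πi)) times the integral of F₃ over the positively oriented circle of radius r centered at 0, equals ∏_{i=1,2} [θ(aᵢz)θ'(0)/(θ((1+aᵢ)z)θ(z))]. -/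

import Mathlib

/-! The residue of `F₃` at `0` is computed by moving it to the other pole. Put `b = (a₁ + 1)z`;
since `a₁ + a₂ = -2`, the other shift is `-b`, and by oddness of `θ`
`F₃(t) = θ'(0)³ θ(t-z) θ(t+2z) θ(t+b) θ(t-b) / (θ(2z) θ(b)² θ(t)³ θ(t+z))`.
The quasi-periodicity factors of `θ` cancel in this expression, so `F₃` is elliptic; modulo the
lattice its only poles are `0` (of order at most three) and `-z` (at most simple). Residues of an
elliptic function add up to zero, so the residue at `0` is minus the one at `-z`, which can be read
off from the formula.

The vanishing of the sum of residues (`residue_core`) is proved without contour deformation. Let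
`L = θ'/θ`, which satisfies `L(t+1) = L(t)` and `L(t+τ) = L(t) - 2πi`. Subtracting from `F₃` a
suitable combination of `L''`, `L'`, `L` and `L(· + z)` cancels all poles. The result extends to an
entire function `E` (`exists_entire_of_removable`) with `E(t+1) = E(t)` and `E(t+τ) = E(t) + c`,
where `c` is `2πi` times the sum of the two residues. Then `E'` is bounded, so `E` is affine by
Liouville's theorem, and being `1`-periodic it is constant, whence `c = 0`
(`quasiPeriod_eq_zero`).

The facts needed about `θ` (it is entire, odd, quasi-periodic, vanishes only on the lattice, and
`θ'(0) ≠ 0`) come from the Euler product `∏ (1 - qⁿ w)` and its functional equation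
`eulerProd_eq_mul`. -/

open Complex Topology Filter

/-- `q = e^{2πiτ}`. -/
noncomputable def jq (τ : ℂ) : ℂ := Complex.exp (2 * Real.pi * I * τ)

/-- The Jacobi theta function
`θ(t,τ) = q^{1/8} · 2 sin(πt) · ∏_{n≥1}(1−qⁿ) · ∏_{n≥1}(1−qⁿe^{2πit})(1−qⁿe^{−2πit})`,
where `q^{1/8} = e^{πiτ/4}`. -/
noncomputable def jTheta (t τ : ℂ) : ℂ :=
  Complex.exp (Real.pi * I * τ / 4) * (2 * Complex.sin (Real.pi * t)) *
    (∏' n : ℕ, (1 - jq τ ^ (n + 1))) *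
    (∏' n : ℕ, (1 - jq τ ^ (n + 1) * Complex.exp (2 * Real.pi * I * t)) *
      (1 - jq τ ^ (n + 1) * Complex.exp (-(2 * Real.pi * I * t))))

/-- `θ(t)` with `τ` fixed. -/
noncomputable def th (τ t : ℂ) : ℂ := jTheta t τ

/-- `θ'(0)`, the derivative of `θ(·,τ)` at `t = 0`. -/
noncomputable def thd (τ : ℂ) : ℂ := deriv (fun t => jTheta t τ) 0

/-- Membership in the lattice `ℤ + τℤ`. -/
def inLat (τ t : ℂ) : Prop := ∃ m n : ℤ, t = (m : ℂ) + (n : ℂ) * τ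

/-- The function `F₃` arising in Case 3 of the proof of birational invariance:
`F₃(t) = [θ(t+z)θ'(0)/(θ(t)θ(z))]²·[θ(t−z)θ'(0)/(θ(t)θ(−z))]·
[θ(t+2z)θ(z)/(θ(t+z)θ(2z))]·∏_{i=1,2}[θ(t+(aᵢ+1)z)θ(z)/(θ(t+z)θ((aᵢ+1)z))]`. -/
noncomputable def F₃ (τ z a₁ a₂ t : ℂ) : ℂ :=
  (th τ (t + z) * thd τ / (th τ t * th τ z)) ^ 2 *
  (th τ (t - z) * thd τ / (th τ t * th τ (-z))) *
  (th τ (t + 2 * z) * th τ z / (th τ (t + z) * th τ (2 * z))) *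
  ((th τ (t + (a₁ + 1) * z) * th τ z / (th τ (t + z) * th τ ((a₁ + 1) * z))) *
    (th τ (t + (a₂ + 1) * z) * th τ z / (th τ (t + z) * th τ ((a₂ + 1) * z))))

/-! ### The theta function -/

theorem norm_jq_lt_one {τ : ℂ} (hτ : 0 < τ.im) : ‖jq τ‖ < 1 := by
  simpa [jq] using UpperHalfPlane.norm_exp_two_pi_I_lt_one ⟨τ, hτ⟩

/-- The Euler product `∏_{n ≥ 1} (1 - qⁿ w)`. -/
noncomputable def eulerProd (q w : ℂ) : ℂ := ∏' n : ℕ, (1 - q ^ (n + 1) * w)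

theorem summable_pow_mul {q : ℂ} (hq : ‖q‖ < 1) (R : ℝ) :
    Summable fun n : ℕ => ‖q‖ ^ (n + 1) * R :=
  ((summable_nat_add_iff 1).mpr (summable_geometric_of_lt_one (norm_nonneg _) hq)).mul_right R

theorem multipliable_eulerProd {q : ℂ} (hq : ‖q‖ < 1) (w : ℂ) :
    Multipliable fun n : ℕ => 1 - q ^ (n + 1) * w := by
  simp_rw [sub_eq_add_neg]
  apply multipliable_one_add_of_summable
  simpa using summable_pow_mul hq ‖w‖

theorem eulerProd_ne_zero {q : ℂ} (hq : ‖q‖ < 1) {w : ℂ}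
    (hw : ∀ n : ℕ, q ^ (n + 1) * w ≠ 1) : eulerProd q w ≠ 0 := by
  simp_rw [eulerProd, sub_eq_add_neg]
  refine tprod_one_add_ne_zero_of_summable (fun n h => hw n ?_) ?_
  · linear_combination -h
  · simpa using summable_pow_mul hq ‖w‖

theorem eulerProd_one_ne_zero {q : ℂ} (hq : ‖q‖ < 1) : eulerProd q 1 ≠ 0 := by
  refine eulerProd_ne_zero hq fun n hn => ?_
  have := congrArg norm hn
  rw [mul_one, norm_pow, norm_one] at this
  exact absurd this (pow_lt_one₀ (norm_nonneg _) hq n.succ_ne_zero).ne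

theorem eulerProd_eq_mul {q : ℂ} (hq : ‖q‖ < 1) (w : ℂ) :
    eulerProd q w = (1 - q * w) * eulerProd q (q * w) := by
  have h := multipliable_eulerProd hq (q * w)
  rw [eulerProd, tprod_eq_zero_mul', eulerProd]
  · simp [pow_succ, mul_assoc]
  · convert h using 2 with n
    ring

theorem differentiable_eulerProd {q : ℂ} (hq : ‖q‖ < 1) : Differentiable ℂ (eulerProd q) := by
  intro w
  have key : HasProdLocallyUniformlyOn (fun (n : ℕ) (w : ℂ) => 1 + -(q ^ (n + 1) * w))
      (fun w => ∏' n : ℕ, (1 + -(q ^ (n + 1) * w))) (Metric.ball 0 (‖w‖ + 1)) := by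
    refine Summable.hasProdLocallyUniformlyOn_nat_one_add Metric.isOpen_ball
      (summable_pow_mul hq (‖w‖ + 1)) (.of_forall fun n x hx => ?_) (fun _ => by fun_prop)
    have hx' : ‖x‖ ≤ ‖w‖ + 1 := by simpa using (Metric.mem_ball.mp hx).le
    simpa using mul_le_mul_of_nonneg_left hx' (by positivity)
  have hd := key.differentiableOn
    (.of_forall fun _ => by
      simpa [Finset.prod_fn] using DifferentiableOn.finsetProd (fun _ _ => by fun_prop))
    Metric.isOpen_ball
  have := hd.differentiableAt (Metric.isOpen_ball.mem_nhds (by simp : w ∈ Metric.ball 0 (‖w‖ + 1)))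
  simpa [eulerProd, sub_eq_add_neg, Function.comp_def] using! this

theorem th_eq {τ : ℂ} (hτ : 0 < τ.im) (t : ℂ) :
    th τ t = cexp (Real.pi * I * τ / 4) * (2 * Complex.sin (Real.pi * t)) * eulerProd (jq τ) 1 *
      (eulerProd (jq τ) (cexp (2 * Real.pi * I * t)) *
        eulerProd (jq τ) (cexp (-(2 * Real.pi * I * t)))) := by
  have hq := norm_jq_lt_one hτ
  rw [th, jTheta, eulerProd, eulerProd, eulerProd,
    (multipliable_eulerProd hq _).tprod_mul (multipliable_eulerProd hq _)]
  simp

theorem differentiable_th {τ : ℂ} (hτ : 0 < τ.im) : Differentiable ℂ (th τ) := by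
  have h := differentiable_eulerProd (norm_jq_lt_one hτ)
  rw [funext (th_eq hτ)]
  fun_prop

theorem th_neg {τ : ℂ} (hτ : 0 < τ.im) (t : ℂ) : th τ (-t) = -th τ t := by
  simp only [th_eq hτ, mul_neg, Complex.sin_neg, neg_neg]
  ring

theorem th_add_one {τ : ℂ} (hτ : 0 < τ.im) (t : ℂ) : th τ (t + 1) = -th τ t := by
  have e1 : cexp (2 * Real.pi * I * (t + 1)) = cexp (2 * Real.pi * I * t) := by
    rw [mul_add, mul_one, Complex.exp_add, Complex.exp_two_pi_mul_I, mul_one]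
  have e2 : cexp (-(2 * Real.pi * I * (t + 1))) = cexp (-(2 * Real.pi * I * t)) := by
    rw [Complex.exp_neg, e1, Complex.exp_neg]
  rw [th_eq hτ, th_eq hτ, e1, e2, mul_add, mul_one, Complex.sin_add_pi]
  ring

theorem th_add_tau {τ : ℂ} (hτ : 0 < τ.im) (t : ℂ) :
    th τ (t + τ) = -cexp (-(Real.pi * I * τ) - 2 * Real.pi * I * t) * th τ t := by
  have hq := norm_jq_lt_one hτ
  rw [th_eq hτ, th_eq hτ, Complex.sin, Complex.sin]
  -- `u = e^{πit}` and `v = e^{πiτ}`, so that `w = u²` and `q = v²`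
  set u := cexp (Real.pi * I * t) with hu
  set v := cexp (Real.pi * I * τ) with hv
  have hu0 : u ≠ 0 := Complex.exp_ne_zero _
  have hv0 : v ≠ 0 := Complex.exp_ne_zero _
  have hqv : jq τ = v ^ 2 := by
    rw [jq, hv, ← Complex.exp_nat_mul]; congr 1; push_cast; ring
  have e1 : cexp (2 * Real.pi * I * (t + τ)) = v ^ 2 * u ^ 2 := by
    rw [hv, hu, ← Complex.exp_nat_mul, ← Complex.exp_nat_mul, ← Complex.exp_add]
    congr 1; push_cast; ring
  have e2 : cexp (2 * Real.pi * I * t) = u ^ 2 := by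
    rw [hu, ← Complex.exp_nat_mul]; congr 1; push_cast; ring
  have e3 : cexp (-(Real.pi * I * τ) - 2 * Real.pi * I * t) = (v * u ^ 2)⁻¹ := by
    rw [Complex.exp_sub, e2, Complex.exp_neg, mul_inv]; rfl
  have e4 : cexp (Real.pi * (t + τ) * I) = u * v := by
    rw [hv, hu, ← Complex.exp_add]; congr 1; ring
  have e5 : cexp (-(Real.pi * (t + τ)) * I) = (u * v)⁻¹ := by
    rw [← e4, ← Complex.exp_neg]; congr 1; ring
  have e6 : cexp (Real.pi * t * I) = u := by rw [hu]; congr 1; ring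
  have e7 : cexp (-(Real.pi * t) * I) = u⁻¹ := by
    rw [← e6, ← Complex.exp_neg]; congr 1; ring
  rw [Complex.exp_neg (2 * Real.pi * I * (t + τ)), Complex.exp_neg (2 * Real.pi * I * t),
    e1, e2, e3, e4, e5, e6, e7, hqv]
  rw [hqv] at hq
  have r1 := eulerProd_eq_mul hq (u ^ 2)
  have r2 := eulerProd_eq_mul hq ((v ^ 2 * u ^ 2)⁻¹)
  rw [show v ^ 2 * (v ^ 2 * u ^ 2)⁻¹ = (u ^ 2)⁻¹ by field_simp] at r2
  rw [r1, r2]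
  field_simp
  ring

theorem inLat_of_th_eq_zero {τ t : ℂ} (hτ : 0 < τ.im) (h : th τ t = 0) : inLat τ t := by
  have hq := norm_jq_lt_one hτ
  have key : ∀ s : ℂ, eulerProd (jq τ) (cexp (2 * Real.pi * I * s)) = 0 → inLat τ s := by
    intro s hs
    by_contra hl
    refine eulerProd_ne_zero hq (fun n hn => hl ?_) hs
    rw [jq, ← Complex.exp_nat_mul, ← Complex.exp_add, Complex.exp_eq_one_iff] at hn
    obtain ⟨m, hm⟩ := hn
    refine ⟨m, -(n + 1), ?_⟩
    have h2 : (2 * Real.pi * I : ℂ) ≠ 0 := Complex.two_pi_I_ne_zero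
    apply mul_left_cancel₀ h2
    push_cast at hm ⊢
    linear_combination hm
  rw [th_eq hτ] at h
  have h1 := eulerProd_one_ne_zero hq
  simp only [mul_eq_zero, Complex.exp_ne_zero, h1, false_or, or_false, OfNat.ofNat_ne_zero] at h
  rcases h with h | h | h
  · obtain ⟨k, hk⟩ := Complex.sin_eq_zero_iff.mp h
    refine ⟨k, 0, ?_⟩
    have : (Real.pi : ℂ) ≠ 0 := by exact_mod_cast Real.pi_ne_zero
    apply mul_left_cancel₀ this
    push_cast
    linear_combination hk
  · exact key t h
  · obtain ⟨m, n, hmn⟩ := key (-t) (by rwa [mul_neg])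
    exact ⟨-m, -n, by push_cast; linear_combination -hmn⟩

theorem th_zero {τ : ℂ} (hτ : 0 < τ.im) : th τ 0 = 0 := by simp [th_eq hτ]

theorem deriv_th_zero_ne_zero {τ : ℂ} (hτ : 0 < τ.im) : deriv (th τ) 0 ≠ 0 := by
  have hq := norm_jq_lt_one hτ
  have hd := differentiable_eulerProd hq
  have h1 := eulerProd_one_ne_zero hq
  -- `θ = sin(π t) · R(t)` with `R(0) ≠ 0`
  let R : ℂ → ℂ := fun t => cexp (Real.pi * I * τ / 4) * 2 * eulerProd (jq τ) 1 *
      (eulerProd (jq τ) (cexp (2 * Real.pi * I * t)) *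
        eulerProd (jq τ) (cexp (-(2 * Real.pi * I * t))))
  have hR : Differentiable ℂ R := by unfold R; fun_prop
  have hth : th τ = fun t => Complex.sin (Real.pi * t) * R t := by
    funext t; rw [th_eq hτ]; simp only [R]; ring
  have hs : HasDerivAt (fun t : ℂ => Complex.sin (Real.pi * t)) (Real.pi : ℂ) 0 := by
    simpa using! ((hasDerivAt_id (0 : ℂ)).const_mul (Real.pi : ℂ)).csin
  rw [hth, (hs.fun_mul (hR 0).hasDerivAt).deriv]
  simp [R, h1, Real.pi_ne_zero]

/-! ### Removable singularities, residues and entire functions with quasi-periods -/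

theorem exists_eq_add_mul_of_analyticAt {G : ℂ → ℂ} {c : ℂ} (hG : AnalyticAt ℂ G c) :
    ∃ H : ℂ → ℂ, AnalyticAt ℂ H c ∧ ∀ t, G t = G c + (t - c) * H t := by
  refine ⟨dslope G c, ?_, fun t => ?_⟩
  · obtain ⟨p, hp⟩ := hG
    exact ⟨_, hp.has_fpower_series_dslope_fslope⟩
  · have := sub_smul_dslope G c t
    rw [smul_eq_mul] at this
    rw [this]; ring

theorem tendsto_add_nhdsNE (x a : ℂ) : Tendsto (fun t => t + a) (𝓝[≠] x) (𝓝[≠] (x + a)) := by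
  refine tendsto_nhdsWithin_iff.mpr ⟨?_, ?_⟩
  · exact ((continuous_add_const a).tendsto x).mono_left nhdsWithin_le_nhds
  · filter_upwards [self_mem_nhdsWithin] with t ht
    simpa using ht

/-- A function with only removable singularities extends to an entire function. -/
theorem exists_entire_of_removable {g : ℂ → ℂ}
    (h : ∀ x, ∃ φ : ℂ → ℂ, AnalyticAt ℂ φ x ∧ g =ᶠ[𝓝[≠] x] φ) :
    ∃ G : ℂ → ℂ, Differentiable ℂ G ∧ ∀ x, g =ᶠ[𝓝[≠] x] G := by
  choose φ hφ hg using h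
  have key : ∀ x, ∀ᶠ y in 𝓝[≠] x, φ y y = φ x y := by
    intro x
    have h1 := eventually_eventually_nhdsWithin.mpr (hg x)
    have h2 : ∀ᶠ y in 𝓝[≠] x, AnalyticAt ℂ (φ x) y :=
      (hφ x).eventually_analyticAt.filter_mono nhdsWithin_le_nhds
    filter_upwards [h1, h2, self_mem_nhdsWithin] with y hy hy2 hyx
    have h3 : ∀ᶠ t in 𝓝[≠] y, g t = φ x t := by
      rw [(isOpen_compl_singleton (x := x)).nhdsWithin_eq hyx] at hy
      exact hy.filter_mono nhdsWithin_le_nhds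
    refine tendsto_nhds_unique (l := 𝓝[≠] y) (((hφ y).continuousAt.tendsto.mono_left nhdsWithin_le_nhds).congr' ?_)
      (hy2.continuousAt.tendsto.mono_left nhdsWithin_le_nhds)
    filter_upwards [hg y, h3] with t ht ht'
    rw [← ht, ht']
  refine ⟨fun x => φ x x, fun x => ?_, fun x => ?_⟩
  · refine ((hφ x).congr ?_).differentiableAt
    have := key x
    rw [eventually_nhdsWithin_iff] at this
    filter_upwards [this] with y hy
    by_cases hyx : y = x
    · rw [hyx]
    · exact (hy hyx).symm
  · filter_upwards [hg x, key x] with y hy hy'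
    rw [hy, hy']

/-- If the quasi-period `c` were nonzero, `G` would be a nonconstant entire function with
doubly periodic, hence constant, derivative; such a `G` is affine and is not `1`-periodic. -/
theorem quasiPeriod_eq_zero {G : ℂ → ℂ} {τ c : ℂ} (hτ : 0 < τ.im) (hG : Differentiable ℂ G)
    (h1 : ∀ t, G (t + 1) = G t) (h2 : ∀ t, G (t + τ) = G t + c) : c = 0 := by
  have hG' : Differentiable ℂ (deriv G) := fun x =>
    (hG.analyticAt x).deriv.differentiableAt
  have d1 : ∀ t, deriv G (t + 1) = deriv G t := fun t => by
    rw [← deriv_comp_add_const]; simp_rw [h1]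
  have d2 : ∀ t, deriv G (t + τ) = deriv G t := fun t => by
    rw [← deriv_comp_add_const]; simp_rw [h2]; simp
  have p1 : Function.Periodic (deriv G) 1 := d1
  have p2 : Function.Periodic (deriv G) τ := d2
  have hb : Bornology.IsBounded (Set.range (deriv G)) := by
    have hK : IsCompact ((fun p : ℝ × ℝ => deriv G ((p.1 : ℂ) + (p.2 : ℂ) * τ)) ''
        (Set.Icc 0 1 ×ˢ Set.Icc 0 1)) := by
      refine (isCompact_Icc.prod isCompact_Icc).image ?_
      have := hG'.continuous
      fun_prop
    refine hK.isBounded.subset ?_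
    rintro _ ⟨t, rfl⟩
    -- real coordinates of `t` in the basis `1, τ`
    let y : ℝ := t.im / τ.im
    let x : ℝ := t.re - y * τ.re
    have ht : t = (x : ℂ) + (y : ℂ) * τ := by
      apply Complex.ext
      · simp [x]
      · simp [y, hτ.ne']
    refine ⟨(Int.fract x, Int.fract y), ⟨⟨Int.fract_nonneg _, (Int.fract_lt_one _).le⟩,
      ⟨Int.fract_nonneg _, (Int.fract_lt_one _).le⟩⟩, ?_⟩
    have e : ((Int.fract x : ℝ) : ℂ) + ((Int.fract y : ℝ) : ℂ) * τ =
        t - (⌊y⌋ : ℤ) * τ - (⌊x⌋ : ℤ) * 1 := by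
      rw [ht, Int.fract, Int.fract]; push_cast; ring
    simp only [e]
    rw [p1.sub_int_mul_eq, p2.sub_int_mul_eq]
  have hconst : ∀ t, deriv G t = deriv G 0 := fun t => hG'.apply_eq_apply_of_bounded hb t 0
  have haff : ∀ t, G t - deriv G 0 * t = G 0 := by
    intro t
    have hd : Differentiable ℂ fun t => G t - deriv G 0 * t := by fun_prop
    have := is_const_of_deriv_eq_zero hd (fun s => by
      rw [deriv_fun_sub (hG s) (by fun_prop), hconst s]
      simp) t 0
    simpa using this
  have hα : deriv G 0 = 0 := by
    have a := haff 1
    have b := h1 0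
    rw [zero_add] at b
    linear_combination b - a
  have a := haff τ
  have b := h2 0
  rw [zero_add] at b
  rw [hα] at a
  linear_combination a - b

/-- The circle integral of an explicit Laurent expansion with a pole of order at most three. -/
theorem exists_residue_eq {F H : ℂ → ℂ} {A B C : ℂ} (hH : AnalyticAt ℂ H 0)
    (hF : ∀ᶠ t in 𝓝[≠] (0 : ℂ), F t = A * (t ^ 3)⁻¹ + B * (t ^ 2)⁻¹ + C * t⁻¹ + H t) :
    ∃ ε > 0, ∀ r : ℝ, 0 < r → r < ε →
      (2 * Real.pi * I : ℂ)⁻¹ * (∮ t in C(0, r), F t) = C := by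
  obtain ⟨ε, hε, hb⟩ := Metric.eventually_nhds_iff_ball.mp
    ((eventually_nhdsWithin_iff.mp hF).and hH.eventually_analyticAt)
  refine ⟨ε, hε, fun r hr hrε => ?_⟩
  have hsub : Metric.closedBall (0 : ℂ) r ⊆ Metric.ball 0 ε := Metric.closedBall_subset_ball hrε
  have hne : ∀ t ∈ Metric.sphere (0 : ℂ) r, t ≠ 0 := by
    rintro t ht rfl
    simp at ht
    exact hr.ne ht
  have hcong : (∮ t in C(0, r), F t) =
      ∮ t in C(0, r), (A * (t ^ 3)⁻¹ + B * (t ^ 2)⁻¹ + C * t⁻¹ + H t) :=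
    circleIntegral.integral_congr hr.le fun t ht =>
      (hb t (hsub (Metric.sphere_subset_closedBall ht))).1 (hne t ht)
  have c1 : ContinuousOn (fun t : ℂ => A * (t ^ 3)⁻¹) (Metric.sphere 0 r) :=
    continuousOn_const.mul ((continuousOn_id.pow 3).inv₀ fun t ht => pow_ne_zero _ (hne t ht))
  have c2 : ContinuousOn (fun t : ℂ => B * (t ^ 2)⁻¹) (Metric.sphere 0 r) :=
    continuousOn_const.mul ((continuousOn_id.pow 2).inv₀ fun t ht => pow_ne_zero _ (hne t ht))
  have c3 : ContinuousOn (fun t : ℂ => C * t⁻¹) (Metric.sphere 0 r) :=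
    continuousOn_const.mul (continuousOn_id.inv₀ hne)
  have dH : DifferentiableOn ℂ H (Metric.closedBall 0 r) := fun t ht =>
    (hb t (hsub ht)).2.differentiableAt.differentiableWithinAt
  have c4 : ContinuousOn H (Metric.sphere 0 r) :=
    dH.continuousOn.mono Metric.sphere_subset_closedBall
  have i3 : (∮ t in C((0 : ℂ), r), (t ^ 3)⁻¹) = 0 := by
    simpa using! circleIntegral.integral_sub_zpow_of_ne (by decide : (-3 : ℤ) ≠ -1) 0 0 r
  have i2 : (∮ t in C((0 : ℂ), r), (t ^ 2)⁻¹) = 0 := by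
    simpa using! circleIntegral.integral_sub_zpow_of_ne (by decide : (-2 : ℤ) ≠ -1) 0 0 r
  have i1 : (∮ t in C((0 : ℂ), r), t⁻¹) = 2 * Real.pi * I := by
    simpa using circleIntegral.integral_sub_center_inv (0 : ℂ) hr.ne'
  have i0 : (∮ t in C((0 : ℂ), r), H t) = 0 :=
    circleIntegral_eq_zero_of_differentiable_on_off_countable hr.le Set.countable_empty
      dH.continuousOn fun t ht => (hb t (hsub (Metric.ball_subset_closedBall ht.1))).2.differentiableAt
  rw [hcong, circleIntegral.integral_add
      (((c1.fun_add c2).fun_add c3).circleIntegrable hr.le) (c4.circleIntegrable hr.le),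
    circleIntegral.integral_add ((c1.fun_add c2).circleIntegrable hr.le) (c3.circleIntegrable hr.le),
    circleIntegral.integral_add (c1.circleIntegrable hr.le) (c2.circleIntegrable hr.le)]
  simp only [circleIntegral.integral_const_mul, i3, i2, i1, i0]
  field_simp [Complex.two_pi_I_ne_zero]
  simp

/-- Having a removable singularity is invariant under a translation `σ` for which `g(t + σ) = g(t) + c`
holds outside a discrete set. -/
theorem removable_of_shift {g : ℂ → ℂ} {P : ℂ → Prop} (hP : ∀ x, ∀ᶠ t in 𝓝[≠] x, P t) {σ c : ℂ}
    (hg : ∀ t, P t → g (t + σ) = g t + c) (x : ℂ) :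
    (∃ φ : ℂ → ℂ, AnalyticAt ℂ φ x ∧ g =ᶠ[𝓝[≠] x] φ) ↔
      ∃ φ : ℂ → ℂ, AnalyticAt ℂ φ (x + σ) ∧ g =ᶠ[𝓝[≠] (x + σ)] φ := by
  constructor
  · rintro ⟨φ, hφ, h⟩
    refine ⟨fun s => φ (s + -σ) + c, ?_, ?_⟩
    · have : AnalyticAt ℂ (fun s : ℂ => s + -σ) (x + σ) := by fun_prop
      have h2 : AnalyticAt ℂ φ ((x + σ) + -σ) := by simpa using hφ
      exact (h2.fun_comp_of_eq this rfl).add analyticAt_const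
    · have ht := tendsto_add_nhdsNE (x + σ) (-σ)
      rw [add_neg_cancel_right] at ht
      filter_upwards [ht.eventually h, ht.eventually (hP x)] with s hs hs'
      rw [← hs, ← hg _ hs', neg_add_cancel_right]
  · rintro ⟨φ, hφ, h⟩
    refine ⟨fun t => φ (t + σ) - c, ?_, ?_⟩
    · have : AnalyticAt ℂ (fun s : ℂ => s + σ) x := by fun_prop
      exact (hφ.fun_comp_of_eq this rfl).sub analyticAt_const
    · filter_upwards [(tendsto_add_nhdsNE x σ).eventually h, hP x] with s hs hs'
      rw [← hs, hg _ hs', add_sub_cancel_right]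

theorem removable_of_inLat {g : ℂ → ℂ} {P : ℂ → Prop} (hP : ∀ x, ∀ᶠ t in 𝓝[≠] x, P t) {τ c : ℂ}
    (hg1 : ∀ t, P t → g (t + 1) = g t) (hgτ : ∀ t, P t → g (t + τ) = g t + c) {x y : ℂ}
    (hx : ∃ φ : ℂ → ℂ, AnalyticAt ℂ φ x ∧ g =ᶠ[𝓝[≠] x] φ) (hy : inLat τ (y - x)) :
    ∃ φ : ℂ → ℂ, AnalyticAt ℂ φ y ∧ g =ᶠ[𝓝[≠] y] φ := by
  obtain ⟨m, n, hmn⟩ := hy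
  have s1 := removable_of_shift hP (σ := 1) (c := 0) (by simpa using hg1)
  have s2 := removable_of_shift hP hgτ
  have hm : ∀ m : ℤ, ∃ φ : ℂ → ℂ, AnalyticAt ℂ φ (x + m) ∧ g =ᶠ[𝓝[≠] (x + m)] φ := by
    intro m
    induction m with
    | zero => simpa using hx
    | succ i ih =>
      have := (s1 _).mp ih
      rw [add_assoc] at this
      exact_mod_cast this
    | pred i ih =>
      have e : x + ((-(i : ℤ) - 1 : ℤ) : ℂ) + 1 = x + ((-(i : ℤ) : ℤ) : ℂ) := by push_cast; ring
      refine (s1 _).mpr ?_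
      rwa [e]
  have hn : ∀ n : ℤ, ∃ φ : ℂ → ℂ, AnalyticAt ℂ φ (x + m + n * τ) ∧
      g =ᶠ[𝓝[≠] (x + m + n * τ)] φ := by
    intro n
    induction n with
    | zero => simpa using hm m
    | succ i ih =>
      have e : x + m + (((i : ℤ) + 1 : ℤ) : ℂ) * τ = x + m + ((i : ℤ) : ℂ) * τ + τ := by
        push_cast; ring
      rw [e]
      exact (s2 _).mp ih
    | pred i ih =>
      have e : x + m + ((-(i : ℤ) - 1 : ℤ) : ℂ) * τ + τ = x + m + ((-(i : ℤ) : ℤ) : ℂ) * τ := by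
        push_cast; ring
      refine (s2 _).mpr ?_
      rwa [e]
  rw [show y = x + m + n * τ by linear_combination hmn]
  exact hn n

/-! ### The logarithmic derivative of theta and the sum of residues -/

/-- The logarithmic derivative `θ'/θ`. -/
noncomputable def thL (τ t : ℂ) : ℂ := deriv (th τ) t / th τ t

theorem eventually_th_ne_zero {τ : ℂ} (hτ : 0 < τ.im) (x : ℂ) : ∀ᶠ t in 𝓝[≠] x, th τ t ≠ 0 := by
  have han : AnalyticOnNhd ℂ (th τ) Set.univ := fun t _ => (differentiable_th hτ).analyticAt t
  rcases (han x trivial).eventually_eq_zero_or_eventually_ne_zero with h | h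
  · refine absurd ?_ (deriv_th_zero_ne_zero hτ)
    have := han.eqOn_zero_of_preconnected_of_eventuallyEq_zero isPreconnected_univ trivial h
    have e : th τ = fun _ => 0 := funext fun t => this trivial
    rw [e, deriv_const]
  · exact h

theorem analyticAt_thL {τ : ℂ} (hτ : 0 < τ.im) {t : ℂ} (ht : th τ t ≠ 0) :
    AnalyticAt ℂ (thL τ) t :=
  ((differentiable_th hτ).analyticAt t).deriv.div ((differentiable_th hτ).analyticAt t) ht

theorem thL_add_one {τ : ℂ} (hτ : 0 < τ.im) (t : ℂ) : thL τ (t + 1) = thL τ t := by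
  have h : deriv (th τ) (t + 1) = -deriv (th τ) t := by
    rw [← deriv_comp_add_const]; simp_rw [th_add_one hτ]; simp
  rw [thL, thL, h, th_add_one hτ, neg_div_neg_eq]

theorem thL_add_tau {τ : ℂ} (hτ : 0 < τ.im) {t : ℂ} (ht : th τ t ≠ 0) :
    thL τ (t + τ) = thL τ t + -(2 * Real.pi * I) := by
  have hE : HasDerivAt (fun t => -cexp (-(Real.pi * I * τ) - 2 * Real.pi * I * t))
      (-(cexp (-(Real.pi * I * τ) - 2 * Real.pi * I * t) * (-(2 * Real.pi * I)))) t := by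
    have := ((((hasDerivAt_id t).const_mul (2 * Real.pi * I : ℂ)).const_sub
      (-(Real.pi * I * τ))).cexp).neg
    simpa using! this
  have h : deriv (th τ) (t + τ) = -(cexp (-(Real.pi * I * τ) - 2 * Real.pi * I * t) *
      (-(2 * Real.pi * I))) * th τ t +
      -cexp (-(Real.pi * I * τ) - 2 * Real.pi * I * t) * deriv (th τ) t := by
    rw [← deriv_comp_add_const]
    simp_rw [th_add_tau hτ]
    exact (hE.fun_mul (differentiable_th hτ t).hasDerivAt).deriv
  rw [thL, thL, h, th_add_tau hτ]
  have := Complex.exp_ne_zero (-(Real.pi * I * τ) - 2 * Real.pi * I * t)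
  field_simp
  ring

theorem deriv_add_period {h : ℂ → ℂ} {U : Set ℂ} (hU : IsOpen U) {σ c : ℂ}
    (hh : ∀ t ∈ U, h (t + σ) = h t + c) {t : ℂ} (ht : t ∈ U) : deriv h (t + σ) = deriv h t := by
  rw [← deriv_comp_add_const]
  have : (fun s => h (s + σ)) =ᶠ[𝓝 t] fun s => h s + c := by
    filter_upwards [hU.mem_nhds ht] with s hs using hh s hs
  rw [this.deriv_eq, deriv_add_const]

theorem exists_th_eq_mul {τ : ℂ} (hτ : 0 < τ.im) :
    ∃ u : ℂ → ℂ, AnalyticAt ℂ u 0 ∧ u 0 = deriv (th τ) 0 ∧ ∀ t, th τ t = t * u t := by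
  obtain ⟨u, hu, h⟩ := exists_eq_add_mul_of_analyticAt ((differentiable_th hτ).analyticAt 0)
  have h' : ∀ t, th τ t = t * u t := fun t => by rw [h, th_zero hτ]; ring
  refine ⟨u, hu, ?_, h'⟩
  rw [funext h', ((hasDerivAt_id' (0 : ℂ)).fun_mul hu.differentiableAt.hasDerivAt).deriv]
  simp

/-- The Laurent expansions at `0` of `θ'/θ` and its first two derivatives. -/
theorem exists_thL_expansion {τ : ℂ} (hτ : 0 < τ.im) :
    ∃ k : ℂ → ℂ, AnalyticAt ℂ k 0 ∧ (∀ᶠ t in 𝓝[≠] (0 : ℂ), thL τ t = t⁻¹ + k t) ∧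
      (∀ᶠ t in 𝓝[≠] (0 : ℂ), deriv (thL τ) t = -(t ^ 2)⁻¹ + deriv k t) ∧
      ∀ᶠ t in 𝓝[≠] (0 : ℂ), deriv (deriv (thL τ)) t = 2 * (t ^ 3)⁻¹ + deriv (deriv k) t := by
  obtain ⟨u, hu, hu0, h⟩ := exists_th_eq_mul hτ
  have hu0' : u 0 ≠ 0 := hu0 ▸ deriv_th_zero_ne_zero hτ
  let k : ℂ → ℂ := fun t => deriv u t / u t
  have hk : AnalyticAt ℂ k 0 := hu.deriv.div hu hu0'
  have hne : ∀ᶠ t in 𝓝[≠] (0 : ℂ), u t ≠ 0 :=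
    (hu.continuousAt.eventually_ne hu0').filter_mono nhdsWithin_le_nhds
  have hua : ∀ᶠ t in 𝓝[≠] (0 : ℂ), AnalyticAt ℂ u t :=
    hu.eventually_analyticAt.filter_mono nhdsWithin_le_nhds
  have hka : ∀ᶠ t in 𝓝[≠] (0 : ℂ), AnalyticAt ℂ k t :=
    hk.eventually_analyticAt.filter_mono nhdsWithin_le_nhds
  have e0 : thL τ =ᶠ[𝓝[≠] 0] fun t => t⁻¹ + k t := by
    filter_upwards [hne, hua, self_mem_nhdsWithin] with t h1 h2 h3
    have h3 : t ≠ 0 := h3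
    have hd : deriv (th τ) t = 1 * u t + t * deriv u t := by
      rw [funext h]
      exact ((hasDerivAt_id t).fun_mul h2.differentiableAt.hasDerivAt).deriv
    simp only [thL, k]
    rw [hd, h t]
    field_simp
  have e1 : deriv (thL τ) =ᶠ[𝓝[≠] 0] fun t => -(t ^ 2)⁻¹ + deriv k t := by
    filter_upwards [e0.nhdsNE_deriv, hka, self_mem_nhdsWithin] with t h1 h2 h3
    rw [h1]
    exact ((hasDerivAt_inv h3).fun_add h2.differentiableAt.hasDerivAt).deriv
  have e2 : deriv (deriv (thL τ)) =ᶠ[𝓝[≠] 0] fun t => 2 * (t ^ 3)⁻¹ + deriv (deriv k) t := by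
    filter_upwards [e1.nhdsNE_deriv, hka, self_mem_nhdsWithin] with t h1 h2 h3
    have h3 : t ≠ 0 := h3
    rw [h1]
    have := (((hasDerivAt_pow 2 t).fun_inv (pow_ne_zero 2 h3)).fun_neg).fun_add
      h2.deriv.differentiableAt.hasDerivAt
    rw [this.deriv]
    field_simp
    push_cast
    ring
  exact ⟨k, hk, e0, e1, e2⟩

/-- The residues of an elliptic function with a pole of order at most three at `0` and at most
one at `-z` add up to zero, the function being written as `N / (θ(t)³ θ(t + z))`. Subtracting
`(G₀/2) L'' - G₁ L' + G₂ L + D L(· + z)` from `F`, where `L = θ'/θ`, `G₀, G₁, G₂` are the polar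
coefficients of `F` at `0` and `D` is its residue at `-z`, removes all its poles. The resulting
entire function is `1`-periodic with additive `τ`-quasi-period `2πi (G₂ + D)`. -/
theorem residue_core {τ z : ℂ} (hτ : 0 < τ.im) (hz : th τ z ≠ 0) {N F : ℂ → ℂ}
    (hN : Differentiable ℂ N)
    (hF : ∀ t, th τ t ≠ 0 → th τ (t + z) ≠ 0 → F t = N t / (th τ t ^ 3 * th τ (t + z)))
    (hF1 : ∀ t, th τ t ≠ 0 → th τ (t + z) ≠ 0 → F (t + 1) = F t)
    (hFτ : ∀ t, th τ t ≠ 0 → th τ (t + z) ≠ 0 → F (t + τ) = F t) :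
    ∃ ε > 0, ∀ r : ℝ, 0 < r → r < ε →
      (2 * Real.pi * I : ℂ)⁻¹ * (∮ t in C(0, r), F t) =
        -(N (-z) / (th τ (-z) ^ 3 * deriv (th τ) 0)) := by
  have hf := differentiable_th hτ
  have hz' : th τ (-z) ≠ 0 := by rw [th_neg hτ]; exact neg_ne_zero.mpr hz
  obtain ⟨u, hu, hu0, hfu⟩ := exists_th_eq_mul hτ
  have hu0' : u 0 ≠ 0 := hu0 ▸ deriv_th_zero_ne_zero hτ
  obtain ⟨k, hk, k0, k1, k2⟩ := exists_thL_expansion hτ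
  have ne0 := eventually_th_ne_zero hτ
  have nez : ∀ x, ∀ᶠ t in 𝓝[≠] x, th τ (t + z) ≠ 0 := fun x =>
    (tendsto_add_nhdsNE x z).eventually (ne0 (x + z))
  have shan : ∀ x, AnalyticAt ℂ (fun t : ℂ => t + z) x := fun x => by fun_prop
  -- Laurent expansion of `F` at `0`
  let G : ℂ → ℂ := fun t => N t / (u t ^ 3 * th τ (t + z))
  have hG : AnalyticAt ℂ G 0 := by
    refine (hN.analyticAt 0).div ((hu.pow 3).mul ?_) ?_
    · exact (hf.analyticAt (0 + z)).fun_comp_of_eq (shan 0) rfl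
    · simpa [hu0'] using hz
  obtain ⟨G1, hG1, eG⟩ := exists_eq_add_mul_of_analyticAt hG
  obtain ⟨G2, hG2, eG1⟩ := exists_eq_add_mul_of_analyticAt hG1
  obtain ⟨H, hH, eG2⟩ := exists_eq_add_mul_of_analyticAt hG2
  have F0 : ∀ᶠ t in 𝓝[≠] (0 : ℂ),
      F t = G 0 * (t ^ 3)⁻¹ + G1 0 * (t ^ 2)⁻¹ + G2 0 * t⁻¹ + H t := by
    filter_upwards [ne0 0, nez 0, self_mem_nhdsWithin] with t h1 h2 h3
    have h3 : t ≠ 0 := h3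
    have : F t = G t * (t ^ 3)⁻¹ := by
      rw [hF t h1 h2]
      simp only [G]
      rw [hfu t] at h1 ⊢
      have := right_ne_zero_of_mul h1
      field_simp
    rw [this, eG t, eG1 t, eG2 t]
    field_simp
    ring
  -- Laurent expansion of `F` at `-z`
  let M : ℂ → ℂ := fun t => N t / (th τ t ^ 3 * u (t + z))
  have hM : AnalyticAt ℂ M (-z) := by
    refine (hN.analyticAt _).div (((hf.analyticAt _).pow 3).mul ?_) ?_
    · exact hu.fun_comp_of_eq (shan (-z)) (by simp)
    · simpa [hu0'] using hz'
  obtain ⟨H', hH', eM⟩ := exists_eq_add_mul_of_analyticAt hM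
  have tz : Tendsto (fun t => t + z) (𝓝[≠] (-z)) (𝓝[≠] 0) := by
    simpa using tendsto_add_nhdsNE (-z) z
  have Fz : ∀ᶠ t in 𝓝[≠] (-z), F t = M (-z) * (t + z)⁻¹ + H' t := by
    filter_upwards [ne0 (-z), nez (-z), tz.eventually self_mem_nhdsWithin] with t h1 h2 h3
    have h3 : t + z ≠ 0 := h3
    have : F t = M t * (t + z)⁻¹ := by
      rw [hF t h1 h2]
      simp only [M]
      rw [hfu (t + z)] at h2 ⊢
      have := right_ne_zero_of_mul h2
      field_simp
    rw [this, eM t, sub_neg_eq_add]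
    field_simp
  obtain ⟨ε, hε, hres⟩ := exists_residue_eq hH F0
  refine ⟨ε, hε, fun r hr hrε => ?_⟩
  rw [hres r hr hrε]
  have hMz : M (-z) = N (-z) / (th τ (-z) ^ 3 * deriv (th τ) 0) := by simp [M, hu0]
  rw [← hMz]
  -- subtract the principal parts
  let g : ℂ → ℂ := fun t => F t - G 0 / 2 * deriv (deriv (thL τ)) t + G1 0 * deriv (thL τ) t
    - G2 0 * thL τ t - M (-z) * thL τ (t + z)
  let P : ℂ → Prop := fun t => th τ t ≠ 0 ∧ th τ (t + z) ≠ 0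
  have hP : ∀ x, ∀ᶠ t in 𝓝[≠] x, P t := fun x => (ne0 x).and (nez x)
  have hU : IsOpen {t | th τ t ≠ 0} := isOpen_ne_fun hf.continuous continuous_const
  have hg1 : ∀ t, P t → g (t + 1) = g t := by
    intro t ht
    have a1 : ∀ s, deriv (thL τ) (s + 1) = deriv (thL τ) s := fun s =>
      deriv_add_period isOpen_univ (c := 0) (fun t _ => by rw [thL_add_one hτ, add_zero]) trivial
    have a2 : deriv (deriv (thL τ)) (t + 1) = deriv (deriv (thL τ)) t :=
      deriv_add_period isOpen_univ (c := 0) (fun t _ => by rw [a1, add_zero]) trivial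
    simp only [g]
    rw [hF1 t ht.1 ht.2, a2, a1, thL_add_one hτ, add_right_comm, thL_add_one hτ]
  have hgτ : ∀ t, P t → g (t + τ) = g t + 2 * Real.pi * I * (G2 0 + M (-z)) := by
    intro t ht
    have a1 : ∀ s ∈ {t | th τ t ≠ 0}, deriv (thL τ) (s + τ) = deriv (thL τ) s := fun s hs =>
      deriv_add_period hU (fun t ht => thL_add_tau hτ ht) hs
    have a2 : deriv (deriv (thL τ)) (t + τ) = deriv (deriv (thL τ)) t :=
      deriv_add_period hU (c := 0) (fun t ht => by rw [a1 t ht, add_zero]) ht.1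
    simp only [g]
    rw [hFτ t ht.1 ht.2, a2, a1 t ht.1, thL_add_tau hτ ht.1, add_right_comm, thL_add_tau hτ ht.2]
    ring
  have R0 : ∃ φ : ℂ → ℂ, AnalyticAt ℂ φ 0 ∧ g =ᶠ[𝓝[≠] 0] φ := by
    refine ⟨fun t => H t - G 0 / 2 * deriv (deriv k) t + G1 0 * deriv k t - G2 0 * k t
      - M (-z) * thL τ (t + z), ?_, ?_⟩
    · have h1 : AnalyticAt ℂ (fun t => thL τ (t + z)) 0 :=
        (analyticAt_thL hτ (t := 0 + z) (by simpa using hz)).fun_comp_of_eq (shan 0) rfl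
      have h2 := hk.deriv
      have h3 := hk.deriv.deriv
      fun_prop
    · filter_upwards [F0, k0, k1, k2] with t h1 h2 h3 h4
      simp only [g]
      rw [h1, h2, h3, h4]
      ring
  have Rz : ∃ φ : ℂ → ℂ, AnalyticAt ℂ φ (-z) ∧ g =ᶠ[𝓝[≠] (-z)] φ := by
    refine ⟨fun t => H' t - G 0 / 2 * deriv (deriv (thL τ)) t + G1 0 * deriv (thL τ) t
      - G2 0 * thL τ t - M (-z) * k (t + z), ?_, ?_⟩
    · have h0 := analyticAt_thL hτ hz'
      have h1 : AnalyticAt ℂ (fun t => k (t + z)) (-z) := hk.fun_comp_of_eq (shan (-z)) (by simp)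
      exact (((hH'.fun_sub (analyticAt_const.fun_mul h0.deriv.deriv)).fun_add
        (analyticAt_const.fun_mul h0.deriv)).fun_sub (analyticAt_const.fun_mul h0)).fun_sub
        (analyticAt_const.fun_mul h1)
    · filter_upwards [Fz, tz.eventually k0] with t h1 h2
      simp only [g]
      rw [h1, h2]
      ring
  have hrem : ∀ x, ∃ φ : ℂ → ℂ, AnalyticAt ℂ φ x ∧ g =ᶠ[𝓝[≠] x] φ := by
    intro x
    by_cases hx : th τ x = 0
    · exact removable_of_inLat hP hg1 hgτ R0 (by simpa using inLat_of_th_eq_zero hτ hx)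
    by_cases hxz : th τ (x + z) = 0
    · exact removable_of_inLat hP hg1 hgτ Rz (by simpa using inLat_of_th_eq_zero hτ hxz)
    -- away from the poles `g` agrees with an analytic function because `F` agrees with `N / (…)`
    refine ⟨fun t => N t / (th τ t ^ 3 * th τ (t + z)) - G 0 / 2 * deriv (deriv (thL τ)) t
      + G1 0 * deriv (thL τ) t - G2 0 * thL τ t - M (-z) * thL τ (t + z), ?_, ?_⟩
    · have h0 := analyticAt_thL hτ hx
      have h1 : AnalyticAt ℂ (fun t => thL τ (t + z)) x :=
        (analyticAt_thL hτ hxz).fun_comp_of_eq (shan x) rfl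
      have h2 := h0.deriv
      have h3 := h0.deriv.deriv
      have h4 : AnalyticAt ℂ (fun t => N t / (th τ t ^ 3 * th τ (t + z))) x := by
        refine (hN.analyticAt x).div (((hf.analyticAt x).pow 3).mul ?_) ?_
        · exact (hf.analyticAt (x + z)).fun_comp_of_eq (shan x) rfl
        · exact mul_ne_zero (pow_ne_zero _ hx) hxz
      fun_prop
    · filter_upwards [hP x] with t ht
      simp only [g]
      rw [hF t ht.1 ht.2]
  obtain ⟨E, hE, hgE⟩ := exists_entire_of_removable hrem
  have hEper : ∀ σ c : ℂ, (∀ t, P t → g (t + σ) = g t + c) → ∀ t, E (t + σ) = E t + c := by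
    intro σ c h t
    have l1 : Tendsto (fun s => E (s + σ)) (𝓝[≠] t) (𝓝 (E (t + σ))) :=
      (hE.continuous.tendsto _).comp
        (((continuous_add_const σ).tendsto t).mono_left nhdsWithin_le_nhds)
    have l2 : Tendsto (fun s => E s + c) (𝓝[≠] t) (𝓝 (E t + c)) :=
      ((hE.continuous.tendsto t).mono_left nhdsWithin_le_nhds).add_const c
    refine tendsto_nhds_unique (l1.congr' ?_) l2
    filter_upwards [hP t, hgE t, (tendsto_add_nhdsNE t σ).eventually (hgE (t + σ))] with s a b d
    rw [← d, ← b, h s a]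
  have h0 := quasiPeriod_eq_zero hτ hE
    (fun t => by simpa using hEper 1 0 (fun t ht => by rw [hg1 t ht, add_zero]) t) (hEper τ _ hgτ)
  rcases mul_eq_zero.mp h0 with h | h
  · exact absurd h Complex.two_pi_I_ne_zero
  · linear_combination h

/-! ### The residue of `F₃` -/

/-- The residue of `F₃` at `t = 0`, computed as `(1/2πi)` times the integral over a small
positively oriented circle around `0`, equals `∏_{i=1,2}[θ(aᵢz)θ'(0)/(θ((1+aᵢ)z)θ(z))]`. -/
theorem F₃_residue_at_zero (τ z a₁ a₂ : ℂ) (hτ : 0 < τ.im) (ha : a₁ + a₂ = -2)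
    (hz : ¬ inLat τ z) (h2z : ¬ inLat τ (2 * z))
    (ha₁ : ¬ inLat τ ((a₁ + 1) * z)) (ha₂ : ¬ inLat τ ((a₂ + 1) * z)) :
    ∃ ε > 0, ∀ r : ℝ, 0 < r → r < ε →
      (2 * Real.pi * I : ℂ)⁻¹ * (∮ t in C(0, r), F₃ τ z a₁ a₂ t) =
        (th τ (a₁ * z) * thd τ / (th τ ((1 + a₁) * z) * th τ z)) *
          (th τ (a₂ * z) * thd τ / (th τ ((1 + a₂) * z) * th τ z)) := by
  have nz : ∀ s, ¬ inLat τ s → th τ s ≠ 0 := fun s hs h => hs (inLat_of_th_eq_zero hτ h)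
  have hz0 := nz _ hz
  have h2z0 := nz _ h2z
  have hb0 := nz _ ha₁
  set b := (a₁ + 1) * z with hb
  -- `a₁ + a₂ = -2` makes the two shifts opposite
  have hb2 : (a₂ + 1) * z = -b := by rw [hb]; linear_combination z * ha
  have hthd : thd τ = deriv (th τ) 0 := rfl
  let N : ℂ → ℂ := fun t => thd τ ^ 3 / (th τ (2 * z) * th τ b ^ 2) *
    (th τ (t - z) * th τ (t + 2 * z) * th τ (t + b) * th τ (t - b))
  have hf := differentiable_th hτ
  have hN : Differentiable ℂ N := by unfold N; fun_prop
  have hF : ∀ t, th τ t ≠ 0 → th τ (t + z) ≠ 0 →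
      F₃ τ z a₁ a₂ t = N t / (th τ t ^ 3 * th τ (t + z)) := by
    intro t h1 h2
    simp only [F₃, N]
    rw [← hb, hb2, th_neg hτ, th_neg hτ, ← sub_eq_add_neg]
    field_simp
  have hN1 : ∀ t, N (t + 1) = N t := fun t => by
    simp only [N]
    rw [add_sub_right_comm, add_right_comm t 1 (2 * z), add_right_comm t 1 b,
      add_sub_right_comm t 1 b]
    simp only [th_add_one hτ]
    ring
  -- the automorphy factor at `t + τ`, as a function of `t`
  let μ : ℂ → ℂ := fun t => -cexp (-(Real.pi * I * τ) - 2 * Real.pi * I * t)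
  have hμ0 : ∀ t, μ t ≠ 0 := fun t => neg_ne_zero.mpr (Complex.exp_ne_zero _)
  have hfτ : ∀ t, th τ (t + τ) = μ t * th τ t := th_add_tau hτ
  have hμ : ∀ t, μ (t - z) * μ (t + 2 * z) * μ (t + b) * μ (t - b) = μ t ^ 3 * μ (t + z) := by
    intro t
    have e : ∀ x y v w : ℂ, -cexp x * -cexp y * -cexp v * -cexp w = cexp (x + y + v + w) := by
      intro x y v w; simp only [Complex.exp_add]; ring
    have e' : ∀ x w : ℂ, (-cexp x) ^ 3 * -cexp w = cexp (x + x + x + w) := by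
      intro x w; simp only [Complex.exp_add]; ring
    simp only [μ]
    rw [e, e']
    congr 1
    ring
  have hNτ : ∀ t, N (t + τ) = μ t ^ 3 * μ (t + z) * N t := fun t => by
    rw [← hμ]
    simp only [N]
    rw [add_sub_right_comm, add_right_comm t τ (2 * z), add_right_comm t τ b,
      add_sub_right_comm t τ b]
    simp only [hfτ]
    ring
  obtain ⟨ε, hε, h⟩ := residue_core hτ hz0 hN hF
    (fun t h1 h2 => by
      have e1 : th τ (t + 1 + z) = -th τ (t + z) := by rw [add_right_comm, th_add_one hτ]
      have e0 := th_add_one hτ t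
      rw [hF t h1 h2, hF (t + 1) (by rw [e0]; exact neg_ne_zero.mpr h1)
        (by rw [e1]; exact neg_ne_zero.mpr h2), e0, e1, hN1]
      congr 1
      ring)
    (fun t h1 h2 => by
      have e1 : th τ (t + τ + z) = μ (t + z) * th τ (t + z) := by rw [add_right_comm, hfτ]
      have m0 := hμ0 t
      have m1 := hμ0 (t + z)
      rw [hF t h1 h2, hF (t + τ) (by rw [hfτ]; exact mul_ne_zero m0 h1)
        (by rw [e1]; exact mul_ne_zero m1 h2), hfτ, e1, hNτ]
      field_simp)
  refine ⟨ε, hε, fun r hr hrε => ?_⟩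
  rw [h r hr hrε]
  have hd : thd τ ≠ 0 := deriv_th_zero_ne_zero hτ
  simp only [N]
  rw [← hthd, show -z - z = -(2 * z) by ring, show -z + 2 * z = z by ring,
    show -z + b = a₁ * z by rw [hb]; ring,
    show -z - b = a₂ * z by rw [hb]; linear_combination -z * ha,
    show (1 + a₁) * z = b by rw [hb]; ring, show (1 + a₂) * z = -b by rw [← hb2]; ring,
    th_neg hτ, th_neg hτ, th_neg hτ]
  field_simp
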